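/- arXiv:2501.01839 — 7 statements merged into one kernel-verified Lean document; each statement's English description precedes it below -/
import Mathlib

section
/- Let n ≥ 1 and let N and M be n×n complex matrices. The pair (N, M) satisfies the Kalman rank condition if and only if it satisfies the Shizuta–Kawashima condition (SK). -/
open Matrix

/-- The Shizuta–Kawashima condition: the only vector `φ` with `M φ = 0` and
`λ φ + N φ = 0` for some `λ ∈ ℂ` is `φ = 0`. -/
def SKCondition {m : Type*} [Fintype m] (N M : Matrix m m ℂ) : Prop :=
  ∀ (φ : m → ℂ) (l : ℂ), M.mulVec φ = 0 → l • φ + N.mulVec φ = 0 → φ = 0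

/-- The Kalman rank condition: the `n²×n` matrix obtained by stacking
`M, MN, MN², …, MN^{n-1}` vertically has rank `n`. -/
def KalmanRank (n : ℕ) (N M : Matrix (Fin n) (Fin n) ℂ) : Prop :=
  (Matrix.of fun p : Fin n × Fin n => fun j : Fin n =>
    (M * N ^ (p.1 : ℕ)) p.2 j).rank = n

/-!
The vectors killed by every `M N ^ k` form the largest `N`-invariant subspace contained in `ker M`.
The powers `k < deg (minpoly N)`, hence by Cayley–Hamilton the powers `k < n`, already cut it out,
so the Kalman condition says that this subspace is trivial. Over an algebraically closed field
every nonzero invariant subspace contains an eigenvector, so it is trivial exactly when no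
eigenvector of `N` lies in `ker M`.
-/

open Module Module.End

/-- The unobservable subspace of control theory, for the dynamics `f` and the output map `g`: the
vectors whose whole forward orbit under `f` is invisible to `g`. -/
def unobservableSubmodule {R V W : Type*} [CommSemiring R] [AddCommMonoid V] [Module R V]
    [AddCommMonoid W] [Module R W] (f : End R V) (g : V →ₗ[R] W) : Submodule R V :=
  ⨅ k : ℕ, LinearMap.ker (g ∘ₗ f ^ k)

section Semiring

variable {R V W : Type*} [CommSemiring R] [AddCommMonoid V] [Module R V]
  [AddCommMonoid W] [Module R W] {f : End R V} {g : V →ₗ[R] W}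

theorem mem_unobservableSubmodule {v : V} :
    v ∈ unobservableSubmodule f g ↔ ∀ k : ℕ, g ((f ^ k) v) = 0 := by
  simp [unobservableSubmodule]

theorem unobservableSubmodule_le_ker : unobservableSubmodule f g ≤ LinearMap.ker g :=
  fun _ hv ↦ mem_unobservableSubmodule.1 hv 0

theorem unobservableSubmodule_mem_invtSubmodule :
    unobservableSubmodule f g ∈ f.invtSubmodule := fun _ hv ↦
  mem_unobservableSubmodule.2 fun k ↦ mem_unobservableSubmodule.1 hv (k + 1)

theorem le_unobservableSubmodule {p : Submodule R V} (hp : p ∈ f.invtSubmodule)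
    (hpg : p ≤ LinearMap.ker g) : p ≤ unobservableSubmodule f g := fun v hv ↦
  mem_unobservableSubmodule.2 fun k ↦ hpg <| by
    rw [Module.End.pow_apply]
    exact Set.MapsTo.iterate hp k hv

end Semiring

theorem mem_unobservableSubmodule_iff_forall_lt {R V W : Type*} [CommRing R] [Nontrivial R]
    [AddCommGroup V] [Module R V] [AddCommMonoid W] [Module R W] {f : End R V} {g : V →ₗ[R] W}
    (hf : IsIntegral R f) {r : ℕ} (hr : (minpoly R f).natDegree ≤ r) {v : V} :
    v ∈ unobservableSubmodule f g ↔ ∀ k < r, g ((f ^ k) v) = 0 := by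
  refine ⟨fun hv k _ ↦ mem_unobservableSubmodule.1 hv k,
    fun hv ↦ mem_unobservableSubmodule.2 fun k ↦ ?_⟩
  have hk : f ^ k ∈ Submodule.span R
      (Set.range fun i : Fin (minpoly R f).natDegree ↦ f ^ (i : ℕ)) :=
    hf.mem_span_pow ⟨Polynomial.X ^ k, by simp⟩
  generalize f ^ k = a at hk
  induction hk using Submodule.span_induction with
  | mem _ ha =>
    obtain ⟨i, rfl⟩ := ha
    exact hv i (i.isLt.trans_le hr)
  | zero => simp
  | add _ _ _ _ h₁ h₂ => simp [h₁, h₂]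
  | smul _ _ _ ha => simp [ha]

theorem eigenspace_inf_ker_le_unobservableSubmodule {R V W : Type*} [CommRing R] [AddCommGroup V]
    [Module R V] [AddCommMonoid W] [Module R W] {f : End R V} {g : V →ₗ[R] W} (μ : R) :
    f.eigenspace μ ⊓ LinearMap.ker g ≤ unobservableSubmodule f g := by
  refine le_unobservableSubmodule (fun v hv ↦ ?_) inf_le_right
  rw [Submodule.mem_comap, mem_eigenspace_iff.1 hv.1]
  exact Submodule.smul_mem _ μ hv

section IsAlgClosed

variable {K V W : Type*} [Field K] [IsAlgClosed K] [AddCommGroup V] [Module K V]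
  {f : End K V}

theorem eq_bot_of_forall_disjoint_eigenspace {p : Submodule K V} [FiniteDimensional K p]
    (hp : p ∈ f.invtSubmodule) (h : ∀ μ, Disjoint (f.eigenspace μ) p) : p = ⊥ := by
  by_contra hne
  have : Nontrivial p := Submodule.nontrivial_iff_ne_bot.2 hne
  obtain ⟨μ, hμ⟩ := exists_eigenvalue (f.restrict hp)
  exact hμ (eigenspace_restrict_eq_bot hp (h μ))

theorem unobservableSubmodule_eq_bot_iff_forall_disjoint_eigenspace [FiniteDimensional K V]
    [AddCommMonoid W] [Module K W] {g : V →ₗ[K] W} :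
    unobservableSubmodule f g = ⊥ ↔ ∀ μ, Disjoint (f.eigenspace μ) (LinearMap.ker g) := by
  refine ⟨fun h μ ↦ ?_, fun h ↦ ?_⟩
  · exact disjoint_iff_inf_le.2 (h ▸ eigenspace_inf_ker_le_unobservableSubmodule μ)
  · exact eq_bot_of_forall_disjoint_eigenspace unobservableSubmodule_mem_invtSubmodule
      fun μ ↦ (h μ).mono_right unobservableSubmodule_le_ker

end IsAlgClosed

/-- The Kalman (observability) matrix: the blocks `M, MN, …, MN ^ (r - 1)` stacked vertically, row
`(k, i)` being row `i` of `MN ^ k`. -/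
def kalmanMatrix {R m n : Type*} [CommSemiring R] [Fintype n] [DecidableEq n] (r : ℕ)
    (N : Matrix n n R) (M : Matrix m n R) : Matrix (Fin r × m) n R :=
  of fun p j ↦ (M * N ^ (p.1 : ℕ)) p.2 j

theorem kalmanMatrix_mulVec_apply {R m n : Type*} [CommSemiring R] [Fintype n] [DecidableEq n]
    {r : ℕ} (N : Matrix n n R) (M : Matrix m n R) (v : n → R) (k : Fin r) (i : m) :
    (kalmanMatrix r N M *ᵥ v) (k, i) = (M *ᵥ N ^ (k : ℕ) *ᵥ v) i := by
  rw [mulVec_mulVec]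
  rfl

theorem rank_eq_card_iff_ker_mulVecLin_eq_bot {K m n : Type*} [Field K] [Fintype n]
    {A : Matrix m n K} : A.rank = Fintype.card n ↔ LinearMap.ker A.mulVecLin = ⊥ := by
  have rank_add_nullity := A.mulVecLin.finrank_range_add_finrank_ker
  rw [finrank_fintype_fun_eq_card] at rank_add_nullity
  rw [← Submodule.finrank_eq_zero (R := K), Matrix.rank]
  lia

theorem ker_mulVecLin_kalmanMatrix {R m n : Type*} [CommRing R] [Nontrivial R] [Fintype n]
    [DecidableEq n] {N : Matrix n n R} {r : ℕ} (hr : (minpoly R N).natDegree ≤ r)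
    (M : Matrix m n R) :
    LinearMap.ker (kalmanMatrix r N M).mulVecLin =
      unobservableSubmodule (toLin' N) M.mulVecLin := by
  have hr' : (minpoly R (toLin' N)).natDegree ≤ r := by rwa [minpoly_toLin']
  ext v
  rw [mem_unobservableSubmodule_iff_forall_lt (Algebra.IsIntegral.isIntegral _) hr']
  simp [funext_iff, Fin.forall_iff, kalmanMatrix_mulVec_apply, ← toLin'_pow]

theorem natDegree_minpoly_le_card {R n : Type*} [CommRing R] [Nontrivial R] [Fintype n]
    [DecidableEq n] (N : Matrix n n R) : (minpoly R N).natDegree ≤ Fintype.card n := by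
  rw [← N.charpoly_natDegree_eq_dim]
  exact Polynomial.natDegree_le_natDegree (minpoly.min R N N.charpoly_monic N.aeval_self_charpoly)

theorem forall_disjoint_eigenspace_toLin'_iff {R m n : Type*} [CommRing R] [Fintype n]
    [DecidableEq n] {N : Matrix n n R} {M : Matrix m n R} :
    (∀ μ, Disjoint (eigenspace (toLin' N) μ) (LinearMap.ker M.mulVecLin)) ↔
      ∀ (φ : n → R) (l : R), M *ᵥ φ = 0 → l • φ + N *ᵥ φ = 0 → φ = 0 := by
  rw [neg_surjective.forall]
  simp only [Submodule.disjoint_def, mem_eigenspace_iff, LinearMap.mem_ker, mulVecLin_apply,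
    toLin'_apply, neg_smul, eq_neg_iff_add_eq_zero, add_comm (N *ᵥ _)]
  exact ⟨fun h φ l hM hN ↦ h l φ hN hM, fun h l φ hN hM ↦ h φ l hM hN⟩

theorem kalmanRank_iff_SKCondition_general {K m n : Type*} [Field K] [IsAlgClosed K] [Fintype n]
    [DecidableEq n] {N : Matrix n n K} {r : ℕ} (hr : (minpoly K N).natDegree ≤ r)
    (M : Matrix m n K) :
    (kalmanMatrix r N M).rank = Fintype.card n ↔
      ∀ (φ : n → K) (l : K), M *ᵥ φ = 0 → l • φ + N *ᵥ φ = 0 → φ = 0 := by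
  rw [rank_eq_card_iff_ker_mulVecLin_eq_bot, ker_mulVecLin_kalmanMatrix hr,
    unobservableSubmodule_eq_bot_iff_forall_disjoint_eigenspace,
    forall_disjoint_eigenspace_toLin'_iff]

theorem kalmanRank_iff_SKCondition (n : ℕ) (hn : 1 ≤ n)
    (N M : Matrix (Fin n) (Fin n) ℂ) :
    KalmanRank n N M ↔ SKCondition N M := by
  have hr : (minpoly ℂ N).natDegree ≤ n := by simpa using natDegree_minpoly_le_card N
  simpa only [KalmanRank, SKCondition, kalmanMatrix, Fintype.card_fin] using
    kalmanRank_iff_SKCondition_general hr M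
end

section
/- Let n₁, n₂ be nonnegative integers with n = n₁ + n₂. Let M₂₂ be an n₂×n₂ complex matrix, N₁₁ an n₁×n₁ complex matrix, N₂₂ an n₂×n₂ complex matrix, and N₂₁ an n₂×n₁ complex matrix, and set N₁₂ equal to the conjugate transpose of N₂₁. Define the n×n block matrices M = [[0, 0], [0, M₂₂]] and N = [[N₁₁, N₁₂], [N₂₁, N₂₂]]. Let Q be an n₂×n₂ complex matrix such that Re(⟨Qη, η⟩) ≠ 0 for every nonzero η ∈ ℂ^{n₂}. If the pair (N, M) satisfies the (SK) condition, then the pair (N₁₁, N₁₂ Q N₂₁) also satisfies the (SK) condition. -/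
open Matrix

section KernelOfCongruence

variable {k l m n R : Type*} [Fintype k] [Fintype l] [Fintype m] [Fintype n]
  [NonUnitalSemiring R] [StarRing R]

theorem star_dotProduct_conjTranspose_mul_mul_mulVec (B : Matrix m k R) (Q : Matrix m n R)
    (C : Matrix n l R) (x : k → R) (y : l → R) :
    star x ⬝ᵥ (Bᴴ * Q * C) *ᵥ y = star (B *ᵥ x) ⬝ᵥ Q *ᵥ (C *ᵥ y) := by
  rw [star_mulVec, ← dotProduct_mulVec, mulVec_mulVec, mulVec_mulVec, Matrix.mul_assoc]

theorem mulVec_eq_zero_of_conjTranspose_mul_mul_mulVec_eq_zero {Q : Matrix m m R}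
    (hQ : ∀ y : m → R, y ≠ 0 → star y ⬝ᵥ Q *ᵥ y ≠ 0) {B : Matrix m n R} {x : n → R}
    (hx : (Bᴴ * Q * B) *ᵥ x = 0) : B *ᵥ x = 0 := by
  by_contra hBx
  apply hQ (B *ᵥ x) hBx
  rw [← star_dotProduct_conjTranspose_mul_mul_mulVec, hx, dotProduct_zero]

end KernelOfCongruence

section BlockReduction

variable {m n : Type*} [Fintype m] [Fintype n]

theorem SKCondition.of_fromBlocks {N₁₁ K : Matrix m m ℂ} {N₁₂ M₁₂ : Matrix m n ℂ}
    {N₂₁ : Matrix n m ℂ} {N₂₂ M₂₂ : Matrix n n ℂ}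
    (hSK : SKCondition (fromBlocks N₁₁ N₁₂ N₂₁ N₂₂) (fromBlocks 0 M₁₂ 0 M₂₂))
    (hK : ∀ φ, K *ᵥ φ = 0 → N₂₁ *ᵥ φ = 0) : SKCondition N₁₁ K := by
  intro φ l hKφ hN₁₁φ
  have hM : fromBlocks 0 M₁₂ 0 M₂₂ *ᵥ Sum.elim φ 0 = 0 := by
    simp [fromBlocks_mulVec]
  have hN : l • Sum.elim φ 0 + fromBlocks N₁₁ N₁₂ N₂₁ N₂₂ *ᵥ Sum.elim φ 0 = 0 := by
    ext (i | i)
    · simpa [fromBlocks_mulVec] using congrFun hN₁₁φ i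
    · simpa [fromBlocks_mulVec] using congrFun (hK φ hKφ) i
  exact congrArg (· ∘ Sum.inl) (hSK (Sum.elim φ 0) l hM hN)

theorem sk_block_to_reduced_general {N₁₁ : Matrix m m ℂ} {N₁₂ M₁₂ : Matrix m n ℂ}
    {N₂₁ : Matrix n m ℂ} {N₂₂ M₂₂ Q : Matrix n n ℂ}
    (hQ : ∀ η : n → ℂ, η ≠ 0 → star η ⬝ᵥ Q *ᵥ η ≠ 0)
    (hSK : SKCondition (fromBlocks N₁₁ N₁₂ N₂₁ N₂₂) (fromBlocks 0 M₁₂ 0 M₂₂)) :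
    SKCondition N₁₁ (N₂₁ᴴ * Q * N₂₁) :=
  hSK.of_fromBlocks fun _ => mulVec_eq_zero_of_conjTranspose_mul_mul_mulVec_eq_zero hQ

end BlockReduction

theorem sk_block_to_reduced (n₁ n₂ : ℕ)
    (M₂₂ : Matrix (Fin n₂) (Fin n₂) ℂ)
    (N₁₁ : Matrix (Fin n₁) (Fin n₁) ℂ) (N₂₂ : Matrix (Fin n₂) (Fin n₂) ℂ)
    (N₂₁ : Matrix (Fin n₂) (Fin n₁) ℂ)
    (Q : Matrix (Fin n₂) (Fin n₂) ℂ)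
    (hQ : ∀ η : Fin n₂ → ℂ, η ≠ 0 → (star η ⬝ᵥ Q.mulVec η).re ≠ 0)
    (hSK : SKCondition (Matrix.fromBlocks N₁₁ N₂₁ᴴ N₂₁ N₂₂)
        (Matrix.fromBlocks 0 0 0 M₂₂)) :
    SKCondition N₁₁ (N₂₁ᴴ * Q * N₂₁) :=
  sk_block_to_reduced_general (fun η hη h => hQ η hη (by rw [h, Complex.zero_re])) hSK
end

section
/- Let n₁, n₂ be nonnegative integers with n = n₁ + n₂. Let M₂₂ be an invertible n₂×n₂ complex matrix, N₁₁ an n₁×n₁ complex matrix, N₂₂ an n₂×n₂ complex matrix, and N₂₁ an n₂×n₁ complex matrix, and set N₁₂ equal to the conjugate transpose of N₂₁. Define the n×n block matrices M = [[0, 0], [0, M₂₂]] and N = [[N₁₁, N₁₂], [N₂₁, N₂₂]]. Let Q be an n₂×n₂ complex matrix such that Re(⟨Qη, η⟩) ≠ 0 for every nonzero η ∈ ℂ^{n₂}. If the pair (N₁₁, N₁₂ Q N₂₁) satisfies the (SK) condition, then the pair (N, M) also satisfies the (SK) condition. -/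
open Matrix

/-!
As `M₂₂` is injective, the kernel of `M` consists of the vectors `(x, 0)`, and `N (x, 0) =
(N₁₁ x, N₂₁ x)`. So the condition for `(N, M)` asks that `ker N₂₁` contain no eigenvector of `N₁₁`,
and `ker N₂₁ ⊆ ker (P N₂₁)` for every `P`, in particular for `P = N₂₁ᴴ Q`.
-/

theorem sumElim_eq_zero_iff {α β R : Type*} [Zero R] {x : α → R} {y : β → R} :
    Sum.elim x y = 0 ↔ x = 0 ∧ y = 0 := by
  simp only [funext_iff, Sum.forall, Sum.elim_inl, Sum.elim_inr, Pi.zero_apply]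

theorem smul_sumElim {α β R S : Type*} [SMul S R] (c : S) (x : α → R) (y : β → R) :
    c • Sum.elim x y = Sum.elim (c • x) (c • y) :=
  Sum.comp_elim (c • ·) x y

section FromBlocks

variable {m n p q R : Type*} [Fintype m] [Fintype n] [NonUnitalNonAssocSemiring R]

theorem fromBlocks_zero_mulVec_sumElim_eq_zero_iff {D : Matrix q n R}
    (hD : Function.Injective D.mulVec) {x : m → R} {y : n → R} :
    fromBlocks (0 : Matrix p m R) 0 0 D *ᵥ Sum.elim x y = 0 ↔ y = 0 := by
  simp only [fromBlocks_mulVec, Sum.elim_comp_inl, Sum.elim_comp_inr, zero_mulVec, zero_add,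
    sumElim_eq_zero_iff, true_and]
  exact hD.eq_iff' (mulVec_zero D)

theorem smul_add_fromBlocks_mulVec_sumElim_zero_eq_zero_iff {S : Type*} [SMulZeroClass S R]
    {A : Matrix m m R} {B : Matrix m n R} {C : Matrix n m R} {D : Matrix n n R}
    {x : m → R} {c : S} :
    c • Sum.elim x 0 + fromBlocks A B C D *ᵥ Sum.elim x 0 = 0 ↔
      c • x + A *ᵥ x = 0 ∧ C *ᵥ x = 0 := by
  simp only [smul_sumElim, fromBlocks_mulVec, Sum.elim_comp_inl, Sum.elim_comp_inr, smul_zero,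
    mulVec_zero, add_zero, ← Sum.elim_add_add, zero_add, sumElim_eq_zero_iff]

end FromBlocks

theorem skCondition_fromBlocks_iff {m n : Type*} [Fintype m] [Fintype n]
    (N₁₁ : Matrix m m ℂ) (N₁₂ : Matrix m n ℂ) (N₂₁ : Matrix n m ℂ) (N₂₂ : Matrix n n ℂ)
    {M₂₂ : Matrix n n ℂ} (hM₂₂ : Function.Injective M₂₂.mulVec) :
    SKCondition (fromBlocks N₁₁ N₁₂ N₂₁ N₂₂) (fromBlocks 0 0 0 M₂₂) ↔
      ∀ (x : m → ℂ) (c : ℂ), N₂₁ *ᵥ x = 0 → c • x + N₁₁ *ᵥ x = 0 → x = 0 := by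
  constructor
  · intro hSK x c hN₂₁ hN₁₁
    have hφ : Sum.elim x (0 : n → ℂ) = 0 :=
      hSK _ c ((fromBlocks_zero_mulVec_sumElim_eq_zero_iff hM₂₂).2 rfl)
        (smul_add_fromBlocks_mulVec_sumElim_zero_eq_zero_iff.2 ⟨hN₁₁, hN₂₁⟩)
    exact (sumElim_eq_zero_iff.1 hφ).1
  · intro h φ c hM hN
    obtain ⟨x, y, rfl⟩ : ∃ x y, φ = Sum.elim x y := ⟨_, _, (Sum.elim_comp_inl_inr φ).symm⟩
    obtain rfl : y = 0 := (fromBlocks_zero_mulVec_sumElim_eq_zero_iff hM₂₂).1 hM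
    obtain ⟨hN₁₁, hN₂₁⟩ := smul_add_fromBlocks_mulVec_sumElim_zero_eq_zero_iff.1 hN
    exact sumElim_eq_zero_iff.2 ⟨h x c hN₂₁ hN₁₁, rfl⟩

theorem sk_reduced_to_block_general {m n : Type*} [Fintype m] [Fintype n]
    {M₂₂ : Matrix n n ℂ} (hM₂₂ : Function.Injective M₂₂.mulVec)
    (N₁₁ : Matrix m m ℂ) (N₁₂ : Matrix m n ℂ) (N₂₁ : Matrix n m ℂ) (N₂₂ : Matrix n n ℂ)
    (P : Matrix m n ℂ) (hSK : SKCondition N₁₁ (P * N₂₁)) :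
    SKCondition (fromBlocks N₁₁ N₁₂ N₂₁ N₂₂) (fromBlocks 0 0 0 M₂₂) := by
  rw [skCondition_fromBlocks_iff _ _ _ _ hM₂₂]
  intro x c hN₂₁ hN₁₁
  have hPN₂₁ : (P * N₂₁) *ᵥ x = 0 := by rw [← mulVec_mulVec, hN₂₁, mulVec_zero]
  exact hSK x c hPN₂₁ hN₁₁

theorem sk_reduced_to_block (n₁ n₂ : ℕ)
    (M₂₂ : Matrix (Fin n₂) (Fin n₂) ℂ) (hM₂₂ : IsUnit M₂₂)
    (N₁₁ : Matrix (Fin n₁) (Fin n₁) ℂ) (N₂₂ : Matrix (Fin n₂) (Fin n₂) ℂ)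
    (N₂₁ : Matrix (Fin n₂) (Fin n₁) ℂ)
    (Q : Matrix (Fin n₂) (Fin n₂) ℂ)
    (hQ : ∀ η : Fin n₂ → ℂ, η ≠ 0 → (star η ⬝ᵥ Q.mulVec η).re ≠ 0)
    (hSK : SKCondition N₁₁ (N₂₁ᴴ * Q * N₂₁)) :
    SKCondition (Matrix.fromBlocks N₁₁ N₂₁ᴴ N₂₁ N₂₂)
      (Matrix.fromBlocks 0 0 0 M₂₂) :=
  sk_reduced_to_block_general (mulVec_injective_of_isUnit hM₂₂) N₁₁ N₂₁ᴴ N₂₁ N₂₂ (N₂₁ᴴ * Q) hSK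
end

section
/- Let T > 0, let X : [0, T] → ℝ be a continuous, nonnegative and differentiable function, let B ≥ 0 be a constant, and let A : [0, T] → ℝ be a nonnegative integrable function such that (1/2) X'(t) + B X(t) ≤ A(t) X(t)^{1/2} for almost every t in [0, T]. Then for all t ∈ [0, T] one has X(t)^{1/2} + B ∫₀ᵗ X(s)^{1/2} ds ≤ X(0)^{1/2} + ∫₀ᵗ A(s) ds. -/
open MeasureTheory

/-!
Formally `(√X)' = X' / (2 √X) ≤ g` with `g = A - B √X`, but `√X` need not be differentiable where
`X` vanishes. The regularisation `√(X + ε)` is differentiable, with derivative at most `g w`, where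
`w = √X / √(X + ε)` lies in `[0, 1]` and tends to `1` where `X > 0` and to `0` where `X = 0`. At
the zeros of `X` one has `g = A ≥ 0`, so the larger bound `max (g w) g`, dominated by `|g|`,
converges to `g` everywhere as `ε → 0`. Dominated convergence then gives
`√(X t) - √(X 0) ≤ ∫₀ᵗ g`.
-/

open Set Filter Topology

section SqrtWeight

variable {x ε : ℝ}

theorem sqrt_div_sqrt_add_le_one (hε : 0 ≤ ε) : √x / √(x + ε) ≤ 1 :=
  div_le_one_of_le₀ (Real.sqrt_le_sqrt (le_add_of_nonneg_right hε)) (Real.sqrt_nonneg _)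

theorem tendsto_sqrt_div_sqrt_add (hx : 0 < x) :
    Tendsto (fun ε ↦ √x / √(x + ε)) (𝓝 0) (𝓝 1) := by
  have hne : √(x + 0) ≠ 0 := by simpa using (Real.sqrt_pos.2 hx).ne'
  have hcont : ContinuousAt (fun ε ↦ √x / √(x + ε)) 0 := by fun_prop (disch := exact hne)
  simpa [ContinuousAt, div_self (Real.sqrt_pos.2 hx).ne'] using hcont

theorem abs_max_mul_self_le {c w : ℝ} (hw₀ : 0 ≤ w) (hw₁ : w ≤ 1) : |max (c * w) c| ≤ |c| := by
  refine abs_max_le_max_abs_abs.trans (max_le ?_ le_rfl)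
  rw [abs_mul, abs_of_nonneg hw₀]
  exact mul_le_of_le_one_right (abs_nonneg c) hw₁

theorem tendsto_max_mul_sqrt_div_sqrt_add {c : ℝ} (hx : 0 ≤ x) (hc : x = 0 → 0 ≤ c) :
    Tendsto (fun ε ↦ max (c * (√x / √(x + ε))) c) (𝓝 0) (𝓝 c) := by
  rcases hx.eq_or_lt' with rfl | hx
  · simp [hc rfl]
  · simpa using ((tendsto_sqrt_div_sqrt_add hx).const_mul c).max (tendsto_const_nhds (x := c))

theorem div_two_mul_sqrt_add_le {x' c : ℝ} (h : (1 / 2) * x' ≤ c * √x) :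
    x' / (2 * √(x + ε)) ≤ c * (√x / √(x + ε)) :=
  calc x' / (2 * √(x + ε)) = (1 / 2) * x' / √(x + ε) := by ring
    _ ≤ c * √x / √(x + ε) := by gcongr
    _ = c * (√x / √(x + ε)) := mul_div_assoc ..

end SqrtWeight

section Interval

variable {a b : ℝ}

theorem sub_le_integral_of_hasDerivWithinAt_Ioi_of_ae_le {f f' φ : ℝ → ℝ} (hab : a ≤ b)
    (hf : ContinuousOn f (Icc a b)) (hf' : ∀ s ∈ Ioo a b, HasDerivWithinAt f (f' s) (Ioi s) s)
    (hφ : IntegrableOn φ (Icc a b)) (hle : ∀ᵐ s ∂volume.restrict (Icc a b), f' s ≤ φ s) :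
    f b - f a ≤ ∫ s in a..b, φ s := by
  have hmax : (fun s ↦ max (f' s) (φ s)) =ᵐ[volume.restrict (Icc a b)] φ :=
    hle.mono fun s hs ↦ max_eq_right hs
  calc f b - f a ≤ ∫ s in a..b, max (f' s) (φ s) :=
        intervalIntegral.sub_le_integral_of_hasDeriv_right_of_le hab hf hf'
          (hφ.congr hmax.symm) fun s _ ↦ le_max_left _ _
    _ = ∫ s in a..b, φ s := by
        simp only [intervalIntegral.integral_of_le hab, ← integral_Icc_eq_integral_Ioc]
        exact integral_congr_ae hmax

variable {X X' g : ℝ → ℝ}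

theorem integrableOn_max_mul_sqrt_div_sqrt_add {ε : ℝ} (hε : 0 < ε)
    (hX : ContinuousOn X (Icc a b)) (hX₀ : ∀ s ∈ Icc a b, 0 ≤ X s)
    (hg : IntegrableOn g (Icc a b)) :
    IntegrableOn (fun s ↦ max (g s * (√(X s) / √(X s + ε))) (g s)) (Icc a b) := by
  have hweight : ContinuousOn (fun s ↦ √(X s) / √(X s + ε)) (Icc a b) :=
    hX.sqrt.div (hX.add continuousOn_const).sqrt fun s hs ↦
      (Real.sqrt_pos.2 (add_pos_of_nonneg_of_pos (hX₀ s hs) hε)).ne'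
  exact (hg.mul_continuousOn hweight isCompact_Icc).sup hg

theorem tendsto_integral_max_mul_sqrt_div_sqrt_add (hab : a ≤ b)
    (hX : ContinuousOn X (Icc a b)) (hX₀ : ∀ s ∈ Icc a b, 0 ≤ X s)
    (hg : IntegrableOn g (Icc a b))
    (hg₀ : ∀ᵐ s ∂volume.restrict (Icc a b), X s = 0 → 0 ≤ g s) :
    Tendsto (fun ε ↦ ∫ s in a..b, max (g s * (√(X s) / √(X s + ε))) (g s)) (𝓝[>] 0)
      (𝓝 (∫ s in a..b, g s)) := by
  simp only [intervalIntegral.integral_of_le hab, ← integral_Icc_eq_integral_Ioc]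
  refine tendsto_integral_filter_of_dominated_convergence (fun s ↦ |g s|) ?_ ?_ hg.abs ?_
  · filter_upwards [self_mem_nhdsWithin] with ε hε
    exact (integrableOn_max_mul_sqrt_div_sqrt_add hε hX hX₀ hg).aestronglyMeasurable
  · filter_upwards [self_mem_nhdsWithin] with ε hε
    exact .of_forall fun s ↦
      abs_max_mul_self_le (by positivity) (sqrt_div_sqrt_add_le_one (le_of_lt hε))
  · filter_upwards [hg₀, ae_restrict_mem measurableSet_Icc] with s hgs hs
    exact (tendsto_max_mul_sqrt_div_sqrt_add (hX₀ s hs) hgs).mono_left nhdsWithin_le_nhds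

theorem sqrt_add_sub_sqrt_add_le_integral_of_deriv_le_mul_sqrt {ε : ℝ} (hε : 0 < ε) (hab : a ≤ b)
    (hX : ContinuousOn X (Icc a b)) (hX₀ : ∀ s ∈ Icc a b, 0 ≤ X s)
    (hX' : ∀ s ∈ Ioo a b, HasDerivWithinAt X (X' s) (Ioi s) s)
    (hg : IntegrableOn g (Icc a b))
    (hle : ∀ᵐ s ∂volume.restrict (Icc a b), (1 / 2) * X' s ≤ g s * √(X s)) :
    √(X b + ε) - √(X a + ε) ≤ ∫ s in a..b, max (g s * (√(X s) / √(X s + ε))) (g s) :=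
  sub_le_integral_of_hasDerivWithinAt_Ioi_of_ae_le hab (hX.add continuousOn_const).sqrt
    (fun s hs ↦ ((hX' s hs).add_const ε).sqrt
      (add_pos_of_nonneg_of_pos (hX₀ s (Ioo_subset_Icc_self hs)) hε).ne')
    (integrableOn_max_mul_sqrt_div_sqrt_add hε hX hX₀ hg)
    (hle.mono fun _ hs ↦ (div_two_mul_sqrt_add_le hs).trans (le_max_left _ _))

theorem sqrt_sub_sqrt_le_integral_of_deriv_le_mul_sqrt (hab : a ≤ b)
    (hX : ContinuousOn X (Icc a b)) (hX₀ : ∀ s ∈ Icc a b, 0 ≤ X s)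
    (hX' : ∀ s ∈ Ioo a b, HasDerivWithinAt X (X' s) (Ioi s) s)
    (hg : IntegrableOn g (Icc a b))
    (hg₀ : ∀ᵐ s ∂volume.restrict (Icc a b), X s = 0 → 0 ≤ g s)
    (hle : ∀ᵐ s ∂volume.restrict (Icc a b), (1 / 2) * X' s ≤ g s * √(X s)) :
    √(X b) - √(X a) ≤ ∫ s in a..b, g s := by
  have hlhs : Tendsto (fun ε ↦ √(X b + ε) - √(X a + ε)) (𝓝[>] 0) (𝓝 (√(X b) - √(X a))) := by
    have hcont : Continuous fun ε ↦ √(X b + ε) - √(X a + ε) := by fun_prop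
    simpa using (hcont.tendsto 0).mono_left nhdsWithin_le_nhds
  refine le_of_tendsto_of_tendsto hlhs
    (tendsto_integral_max_mul_sqrt_div_sqrt_add hab hX hX₀ hg hg₀) ?_
  filter_upwards [self_mem_nhdsWithin] with ε hε
  exact sqrt_add_sub_sqrt_add_le_integral_of_deriv_le_mul_sqrt hε hab hX hX₀ hX' hg hle

theorem sqrt_differential_inequality_general {A B : ℝ → ℝ}
    (hX : ContinuousOn X (Icc a b)) (hX₀ : ∀ s ∈ Icc a b, 0 ≤ X s)
    (hX' : ∀ s ∈ Ioo a b, HasDerivWithinAt X (X' s) (Ioi s) s)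
    (hA : IntegrableOn A (Icc a b)) (hB : IntegrableOn B (Icc a b))
    (hA₀ : ∀ᵐ s ∂volume.restrict (Icc a b), X s = 0 → 0 ≤ A s)
    (hle : ∀ᵐ s ∂volume.restrict (Icc a b), (1 / 2) * X' s + B s * X s ≤ A s * √(X s)) :
    ∀ t ∈ Icc a b, √(X t) + ∫ s in a..t, B s * √(X s) ≤ √(X a) + ∫ s in a..t, A s := by
  intro t ht
  have hsub : Icc a t ⊆ Icc a b := Icc_subset_Icc_right ht.2
  have hBX : IntegrableOn (fun s ↦ B s * √(X s)) (Icc a b) :=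
    hB.mul_continuousOn hX.sqrt isCompact_Icc
  have hg₀ : ∀ᵐ s ∂volume.restrict (Icc a b), X s = 0 → 0 ≤ A s - B s * √(X s) :=
    hA₀.mono fun s hs hXs ↦ by simpa [hXs] using hs hXs
  have hX'_le : ∀ᵐ s ∂volume.restrict (Icc a b),
      (1 / 2) * X' s ≤ (A s - B s * √(X s)) * √(X s) := by
    filter_upwards [hle, ae_restrict_mem measurableSet_Icc] with s hs hsmem
    rw [sub_mul, mul_assoc, Real.mul_self_sqrt (hX₀ s hsmem)]
    exact le_sub_iff_add_le.2 hs
  have hsqrt := sqrt_sub_sqrt_le_integral_of_deriv_le_mul_sqrt ht.1 (hX.mono hsub)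
    (fun s hs ↦ hX₀ s (hsub hs)) (fun s hs ↦ hX' s (Ioo_subset_Ioo_right ht.2 hs))
    ((hA.sub hBX).mono_set hsub) (ae_restrict_of_ae_restrict_of_subset hsub hg₀)
    (ae_restrict_of_ae_restrict_of_subset hsub hX'_le)
  have hintegrable {f : ℝ → ℝ} (hf : IntegrableOn f (Icc a b)) : IntervalIntegrable f volume a t :=
    (intervalIntegrable_iff_integrableOn_Icc_of_le ht.1).2 (hf.mono_set hsub)
  simp only [Pi.sub_apply] at hsqrt
  rw [intervalIntegral.integral_sub (hintegrable hA) (hintegrable hBX)] at hsqrt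
  linarith

end Interval

theorem sqrt_differential_inequality (T : ℝ) (hT : 0 < T)
    (X X' A : ℝ → ℝ) (B : ℝ) (hB : 0 ≤ B)
    (hXcont : ContinuousOn X (Set.Icc 0 T))
    (hXnonneg : ∀ t ∈ Set.Icc 0 T, 0 ≤ X t)
    (hXderiv : ∀ t ∈ Set.Icc 0 T, HasDerivWithinAt X (X' t) (Set.Icc 0 T) t)
    (hAnonneg : ∀ t ∈ Set.Icc 0 T, 0 ≤ A t)
    (hAint : IntegrableOn A (Set.Icc 0 T))
    (hineq : ∀ᵐ t ∂(volume.restrict (Set.Icc 0 T)),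
      (1 / 2) * X' t + B * X t ≤ A t * Real.sqrt (X t)) :
    ∀ t ∈ Set.Icc 0 T,
      Real.sqrt (X t) + B * ∫ s in (0 : ℝ)..t, Real.sqrt (X s) ≤
        Real.sqrt (X 0) + ∫ s in (0 : ℝ)..t, A s := by
  simpa only [intervalIntegral.integral_const_mul] using
    sqrt_differential_inequality_general (B := fun _ ↦ B) hXcont hXnonneg
      (fun s hs ↦ ((hXderiv s (Ioo_subset_Icc_self hs)).hasDerivAt
        (Icc_mem_nhds hs.1 hs.2)).hasDerivWithinAt)
      hAint continuousOn_const.integrableOn_Icc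
      ((ae_restrict_mem measurableSet_Icc).mono fun s hs _ ↦ hAnonneg s hs) hineq
end

section
/- Let n ≥ 1, let S be an n×n Hermitian positive definite complex matrix, let A be an n×n complex matrix with Re(⟨Aη, η⟩) = 0 for all η ∈ ℂⁿ, let κ > 0, and let B be an n×n complex matrix with Re(⟨Bη, η⟩) ≥ κ |Bη|² for all η ∈ ℂⁿ. Let a, b be real numbers, and assume that the pair (S⁻¹A, S⁻¹B) satisfies the (SK) condition. Then there exist constants c > 0 and C > 0 such that for every ρ > 0, every differentiable function v : [0, ∞) → ℂⁿ satisfying S v'(t) + (ρᵃ A + ρᵇ B) v(t) = 0 for all t ≥ 0 obeys |v(t)| ≤ C · exp(−c t · min(ρᵇ/κ, κ ρ^{2a-b})) · |v(0)| for all t ≥ 0. -/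
open Matrix ComplexOrder

/-!
Put `N = S⁻¹ A`. A vector whose output `B e^{sN} w` vanishes for all `s ∈ [0, 1]` lies in an
`N`-invariant subspace of `ker B`, which contains an eigenvector of `N` unless it is trivial; so
(SK) makes the observability Gramian of `(N, B)` positive definite. Integrating the Gramian's
integrand against the weight `1 - s` gives a Hermitian compensator `P` for which
`Nᴴ P + P N + Bᴴ B` is that Gramian.

For `S v' + (x A + y B) v = 0` take `r = min y (x² / y)` and the Lyapunov functional
`⟨(S + ε (r / x) P) v, v⟩`. The compensator contributes a damping of order `ε r |v|²`. The errors,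
of size `ε r |B v|²` and `ε (r y / x) |v| |B v|`, are absorbed by the dissipation `2 κ y |B v|²`
for `ε` small, because `r ≤ y` and `(r y / x)² ≤ r y`; since `r ≤ x`, the functional stays
comparable to `|v|²`. Hence the energy decays at a rate of order `r`, uniformly in `x` and `y`.
-/

section Lyapunov

open NormedSpace

variable {𝔸 : Type*} [NormedRing 𝔸] [NormedAlgebra ℝ 𝔸] [StarRing 𝔸]

/-- The orbit `s ↦ e^{s N*} Q e^{s N}` of `Q` under the flow of `N`. For `Q = M* M`, its integral
over `[0, 1]` is the observability Gramian of the system `w' = N w` with output `M w`. -/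
noncomputable def expConj (N Q : 𝔸) (s : ℝ) : 𝔸 :=
  exp (s • star N) * Q * exp (s • N)

lemma expConj_zero (N Q : 𝔸) : expConj N Q 0 = Q := by
  simp only [expConj, zero_smul, exp_zero, one_mul, mul_one]

lemma isSelfAdjoint_expConj [ContinuousStar 𝔸] [StarModule ℝ 𝔸] (N : 𝔸) {Q : 𝔸}
    (hQ : IsSelfAdjoint Q) (s : ℝ) : IsSelfAdjoint (expConj N Q s) := by
  simp [IsSelfAdjoint, expConj, star_exp, hQ.star_eq, mul_assoc]

lemma isSelfAdjoint_intervalIntegral [ContinuousStar 𝔸] [StarModule ℝ 𝔸] {f : ℝ → 𝔸} {a b : ℝ}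
    (hf : ∀ s, IsSelfAdjoint (f s)) : IsSelfAdjoint (∫ s in a..b, f s) := by
  have hstar (μ : MeasureTheory.Measure ℝ) : star (∫ s, f s ∂μ) = ∫ s, f s ∂μ := by
    simpa [(hf _).star_eq] using ((starL' ℝ (A := 𝔸)).integral_comp_comm (μ := μ) f).symm
  simp only [IsSelfAdjoint, intervalIntegral, star_sub, hstar]

variable [CompleteSpace 𝔸]

lemma hasDerivAt_expConj (N Q : 𝔸) (s : ℝ) :
    HasDerivAt (expConj N Q) (star N * expConj N Q s + expConj N Q s * N) s := by
  refine (((hasDerivAt_exp_smul_const' (star N) s).mul_const Q).mul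
    (hasDerivAt_exp_smul_const N s)).congr_deriv ?_
  simp only [expConj, mul_assoc]

lemma continuous_expConj (N Q : 𝔸) : Continuous (expConj N Q) :=
  continuous_iff_continuousAt.2 fun s => (hasDerivAt_expConj N Q s).continuousAt

-- The weight `1 - s` turns the integral of the derivative of `expConj N Q` into a boundary term
-- at `0` plus the unweighted integral.
lemma lyapunov_integral_expConj (N Q : 𝔸) :
    star N * (∫ s in (0 : ℝ)..1, (1 - s) • expConj N Q s)
        + (∫ s in (0 : ℝ)..1, (1 - s) • expConj N Q s) * N + Q
      = ∫ s in (0 : ℝ)..1, expConj N Q s := by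
  let lyap : 𝔸 →L[ℝ] 𝔸 :=
    ContinuousLinearMap.mul ℝ 𝔸 (star N) + (ContinuousLinearMap.mul ℝ 𝔸).flip N
  have hcont := continuous_expConj N Q
  have hparts := intervalIntegral.integral_smul_deriv_eq_deriv_smul (a := 0) (b := 1)
    (u := fun s : ℝ => 1 - s) (v := expConj N Q) (v' := fun s => lyap (expConj N Q s))
    (fun s _ => (hasDerivAt_id' s).const_sub 1) (fun s _ => hasDerivAt_expConj N Q s)
    (continuous_const.intervalIntegrable 0 1)
    ((lyap.continuous.comp hcont).intervalIntegrable 0 1)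
  have hcomm := lyap.intervalIntegral_comp_comm (a := 0) (b := 1) (μ := MeasureTheory.volume)
    (f := fun s : ℝ => (1 - s) • expConj N Q s)
    (((continuous_const.sub continuous_id).smul hcont).intervalIntegrable 0 1)
  calc lyap (∫ s in (0 : ℝ)..1, (1 - s) • expConj N Q s) + Q
      = (∫ s in (0 : ℝ)..1, (1 - s) • lyap (expConj N Q s)) + Q := by
        simp only [← hcomm, map_smul]
    _ = ∫ s in (0 : ℝ)..1, expConj N Q s := by
        rw [hparts]
        simp [expConj_zero]

end Lyapunov

section QuadraticForm

variable {m : Type*} [Fintype m] {M H : Matrix m m ℂ}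

/-- The real quadratic form `Re ⟨M v, v⟩` of a complex matrix. -/
def reForm (M : Matrix m m ℂ) (v : m → ℂ) : ℝ :=
  (star v ⬝ᵥ M *ᵥ v).re

lemma reForm_add (M₁ M₂ : Matrix m m ℂ) (v : m → ℂ) :
    reForm (M₁ + M₂) v = reForm M₁ v + reForm M₂ v := by
  simp only [reForm, add_mulVec, dotProduct_add, Complex.add_re]

lemma reForm_smul (r : ℝ) (M : Matrix m m ℂ) (v : m → ℂ) :
    reForm (r • M) v = r * reForm M v := by
  simp only [reForm, smul_mulVec, dotProduct_smul, Complex.smul_re, smul_eq_mul]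

lemma re_star_dotProduct_conjTranspose_mulVec (M : Matrix m m ℂ) (u v : m → ℂ) :
    (star u ⬝ᵥ Mᴴ *ᵥ v).re = (star v ⬝ᵥ M *ᵥ u).re := by
  rw [dotProduct_mulVec, ← star_mulVec, ← star_star v, star_dotProduct_star, star_star]
  simp [dotProduct_comm]

lemma reForm_conjTranspose_mul_add_mul (hH : H.IsHermitian) (N : Matrix m m ℂ) (v : m → ℂ) :
    reForm (Nᴴ * H + H * N) v = 2 * (star v ⬝ᵥ H *ᵥ (N *ᵥ v)).re := by
  have hadj : Nᴴ * H = (H * N)ᴴ := by rw [conjTranspose_mul, hH.eq]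
  rw [reForm_add, hadj, reForm, reForm, re_star_dotProduct_conjTranspose_mulVec,
    ← mulVec_mulVec]
  ring

lemma reForm_conjTranspose_mul_self (M : Matrix m m ℂ) (v : m → ℂ) :
    reForm (Mᴴ * M) v = ∑ i, ‖(M *ᵥ v) i‖ ^ 2 := by
  rw [reForm, ← mulVec_mulVec, dotProduct_mulVec, ← star_mulVec]
  simp [dotProduct, ← Complex.normSq_eq_conj_mul_self, Complex.normSq_eq_norm_sq,
    -Complex.ofReal_pow]

lemma sq_norm_mulVec_le_reForm (M : Matrix m m ℂ) (v : m → ℂ) :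
    ‖M *ᵥ v‖ ^ 2 ≤ reForm (Mᴴ * M) v := by
  rw [reForm_conjTranspose_mul_self, ← Real.le_sqrt (norm_nonneg _) (by positivity),
    pi_norm_le_iff_of_nonneg (Real.sqrt_nonneg _)]
  exact fun i => Real.le_sqrt_of_sq_le
    (Finset.single_le_sum (f := fun i => ‖(M *ᵥ v) i‖ ^ 2) (fun _ _ => by positivity)
      (Finset.mem_univ i))

lemma reForm_le_card_mul_sq_norm_mulVec (M : Matrix m m ℂ) (v : m → ℂ) :
    reForm (Mᴴ * M) v ≤ Fintype.card m * ‖M *ᵥ v‖ ^ 2 := by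
  rw [reForm_conjTranspose_mul_self, ← nsmul_eq_mul]
  exact Finset.sum_le_card_nsmul _ _ _ fun i _ => by gcongr; exact norm_le_pi_norm _ i

lemma posDef_of_reForm_pos (hH : H.IsHermitian) (hpos : ∀ v ≠ 0, 0 < reForm H v) : H.PosDef :=
  .of_dotProduct_mulVec_pos hH fun v hv =>
    Complex.lt_def.2 ⟨hpos v hv, (hH.im_star_dotProduct_mulVec_self v).symm⟩

lemma hasDerivWithinAt_reForm (hH : H.IsHermitian) {v : ℝ → m → ℂ} {v' : m → ℂ} {s : Set ℝ}
    {t : ℝ} (hv : HasDerivWithinAt v v' s t) :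
    HasDerivWithinAt (fun τ => reForm H (v τ)) (2 * (star (v t) ⬝ᵥ H *ᵥ v').re) s t := by
  have hvi := hasDerivWithinAt_pi.1 hv
  have hform : HasDerivWithinAt (fun τ => star (v τ) ⬝ᵥ H *ᵥ v τ)
      (star v' ⬝ᵥ H *ᵥ v t + star (v t) ⬝ᵥ H *ᵥ v') s t := by
    simp only [dotProduct, mulVec, ← Finset.sum_add_distrib]
    exact .fun_sum fun i _ => (hvi i).star.mul (.fun_sum fun j _ => (hvi j).const_mul _)
  have hsymm : (star v' ⬝ᵥ H *ᵥ v t).re = (star (v t) ⬝ᵥ H *ᵥ v').re := by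
    rw [← re_star_dotProduct_conjTranspose_mulVec, hH.eq]
  refine (Complex.reCLM.hasFDerivAt.comp_hasDerivWithinAt t hform).congr_deriv ?_
  rw [Complex.reCLM_apply, Complex.add_re, hsymm, two_mul]

open scoped Matrix.Norms.Operator in
lemma abs_re_star_dotProduct_mulVec_le (M : Matrix m m ℂ) (u v : m → ℂ) :
    |(star u ⬝ᵥ M *ᵥ v).re| ≤ Fintype.card m * ‖M‖ * ‖u‖ * ‖v‖ := by
  calc |(star u ⬝ᵥ M *ᵥ v).re| ≤ ‖∑ i, star (u i) * (M *ᵥ v) i‖ := Complex.abs_re_le_norm _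
    _ ≤ ∑ _i : m, ‖u‖ * (‖M‖ * ‖v‖) := by
        refine norm_sum_le_of_le _ fun i _ => ?_
        rw [norm_mul, norm_star]
        gcongr
        · exact norm_le_pi_norm u i
        · exact (norm_le_pi_norm _ i).trans (linfty_opNorm_mulVec M v)
    _ = Fintype.card m * ‖M‖ * ‖u‖ * ‖v‖ := by
        rw [Finset.sum_const, Finset.card_univ, nsmul_eq_mul]; ring

open scoped Matrix.Norms.Operator in
lemma abs_reForm_le (M : Matrix m m ℂ) (v : m → ℂ) :
    |reForm M v| ≤ Fintype.card m * ‖M‖ * ‖v‖ ^ 2 := by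
  simpa only [reForm, sq, mul_assoc] using abs_re_star_dotProduct_mulVec_le M v v

open scoped Matrix.Norms.L2Operator in
lemma reForm_intervalIntegral [DecidableEq m] {F : ℝ → Matrix m m ℂ} (hF : Continuous F)
    (a b : ℝ) (v : m → ℂ) :
    reForm (∫ s in a..b, F s) v = ∫ s in a..b, reForm (F s) v := by
  let evalAt : Matrix m m ℂ →ₗ[ℝ] ℝ :=
    { toFun := fun X => reForm X v
      map_add' := fun X Y => reForm_add X Y v
      map_smul' := fun r X => reForm_smul r X v }
  exact (evalAt.toContinuousLinearMap.intervalIntegral_comp_comm (hF.intervalIntegrable a b)).symm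

open scoped MatrixOrder Matrix.Norms.L2Operator in
lemma exists_isUnit_eq_conjTranspose_mul_self [DecidableEq m] (hM : M.PosDef) :
    ∃ R : Matrix m m ℂ, IsUnit R ∧ M = Rᴴ * R :=
  CStarAlgebra.isStrictlyPositive_iff_eq_star_mul_self.1 hM.isStrictlyPositive

open scoped Matrix.Norms.Operator in
lemma exists_mul_sq_norm_le_reForm (hM : M.PosDef) :
    ∃ d > 0, ∀ v, d * ‖v‖ ^ 2 ≤ reForm M v := by
  classical
  obtain ⟨R, hR, rfl⟩ := exists_isUnit_eq_conjTranspose_mul_self hM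
  refine ⟨(‖R⁻¹‖ ^ 2 + 1)⁻¹, by positivity, fun v => ?_⟩
  rw [inv_mul_le_iff₀ (by positivity)]
  have hv : R⁻¹ *ᵥ (R *ᵥ v) = v := by
    rw [mulVec_mulVec, nonsing_inv_mul _ ((isUnit_iff_isUnit_det R).1 hR), one_mulVec]
  calc ‖v‖ ^ 2 ≤ (‖R⁻¹‖ * ‖R *ᵥ v‖) ^ 2 := by
        gcongr; simpa only [hv] using linfty_opNorm_mulVec R⁻¹ (R *ᵥ v)
    _ = ‖R⁻¹‖ ^ 2 * ‖R *ᵥ v‖ ^ 2 := mul_pow _ _ _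
    _ ≤ (‖R⁻¹‖ ^ 2 + 1) * reForm (Rᴴ * R) v := by
        gcongr
        · exact le_add_of_nonneg_right zero_le_one
        · exact sq_norm_mulVec_le_reForm R v

end QuadraticForm

section Observability

open Set NormedSpace
open scoped Matrix.Norms.L2Operator

variable {m : Type*} [Fintype m] {N M : Matrix m m ℂ}

lemma SKCondition.of_mul_left {L : Matrix m m ℂ} (h : SKCondition N (L * M)) :
    SKCondition N M := fun φ l hM hN =>
  h φ l (by rw [← mulVec_mulVec, hM, mulVec_zero]) hN

lemma SKCondition.eq_bot_of_invariant (h : SKCondition N M) {U : Submodule ℂ (m → ℂ)}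
    (hN : ∀ u ∈ U, N *ᵥ u ∈ U) (hM : ∀ u ∈ U, M *ᵥ u = 0) : U = ⊥ := by
  by_contra hU
  have : Nontrivial U := Submodule.nontrivial_iff_ne_bot.2 hU
  obtain ⟨μ, hμ⟩ := Module.End.exists_eigenvalue (N.mulVecLin.restrict hN)
  obtain ⟨⟨u, huU⟩, hu⟩ := hμ.exists_hasEigenvector
  have hNu : N *ᵥ u = μ • u := congrArg Subtype.val hu.apply_eq_smul
  refine hu.2 (Subtype.ext (h u (-μ) (hM u huU) ?_))
  rw [hNu, neg_smul, neg_add_cancel]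

section Gramian

variable [DecidableEq m]

/-- The unobservable subspace of the system `w' = N w` with output `M w`: the initial data whose
output vanishes on the time interval `[0, 1]`. -/
noncomputable def unobservableSubspace (N M : Matrix m m ℂ) : Submodule ℂ (m → ℂ) :=
  ⨅ s ∈ Icc (0 : ℝ) 1, LinearMap.ker (M * exp (s • N)).mulVecLin

lemma mem_unobservableSubspace {w : m → ℂ} :
    w ∈ unobservableSubspace N M ↔ ∀ s ∈ Icc (0 : ℝ) 1, (M * exp (s • N)) *ᵥ w = 0 := by
  simp [unobservableSubspace]

lemma mulVec_mem_unobservableSubspace {w : m → ℂ} (hw : w ∈ unobservableSubspace N M) :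
    N *ᵥ w ∈ unobservableSubspace N M := by
  rw [mem_unobservableSubspace] at hw ⊢
  intro s hs
  let outputOf : Matrix m m ℂ →L[ℝ] m → ℂ :=
    LinearMap.toContinuousLinearMap (((mulVecBilin ℝ ℝ).flip w) ∘ₗ LinearMap.mulLeft ℝ M)
  have hderiv : HasDerivWithinAt (fun s : ℝ => (M * exp (s • N)) *ᵥ w)
      ((M * exp (s • N)) *ᵥ (N *ᵥ w)) (Icc 0 1) s := by
    refine (outputOf.hasFDerivAt.comp_hasDerivAt s
      (hasDerivAt_exp_smul_const N s)).hasDerivWithinAt.congr_deriv ?_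
    rw [mulVec_mulVec, Matrix.mul_assoc]
    rfl
  have hzero : HasDerivWithinAt (fun s : ℝ => (M * exp (s • N)) *ᵥ w) 0 (Icc 0 1) s :=
    (hasDerivWithinAt_const s _ 0).congr_of_mem hw hs
  exact (uniqueDiffOn_Icc one_pos s hs).eq_deriv _ hderiv hzero

lemma SKCondition.unobservableSubspace_eq_bot (h : SKCondition N M) :
    unobservableSubspace N M = ⊥ :=
  h.eq_bot_of_invariant (fun _ => mulVec_mem_unobservableSubspace) fun u hu => by
    simpa using mem_unobservableSubspace.1 hu 0 (by simp)

lemma SKCondition.exists_mulVec_exp_ne_zero (h : SKCondition N M) {w : m → ℂ} (hw : w ≠ 0) :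
    ∃ s ∈ Icc (0 : ℝ) 1, (M * exp (s • N)) *ᵥ w ≠ 0 := by
  contrapose! hw
  rwa [← mem_unobservableSubspace, h.unobservableSubspace_eq_bot, Submodule.mem_bot] at hw

lemma expConj_conjTranspose_mul_self (N M : Matrix m m ℂ) (s : ℝ) :
    expConj N (Mᴴ * M) s = (M * exp (s • N))ᴴ * (M * exp (s • N)) := by
  rw [expConj, star_eq_conjTranspose, conjTranspose_mul, ← exp_conjTranspose, conjTranspose_smul,
    star_trivial]
  simp only [Matrix.mul_assoc]

lemma SKCondition.posDef_integral_expConj (h : SKCondition N M) :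
    (∫ s in (0 : ℝ)..1, expConj N (Mᴴ * M) s).PosDef := by
  refine posDef_of_reForm_pos (isSelfAdjoint_intervalIntegral
    (isSelfAdjoint_expConj N (isHermitian_conjTranspose_mul_self M))) fun w hw => ?_
  have hcont : Continuous fun s => reForm (expConj N (Mᴴ * M) s) w :=
    Complex.continuous_re.comp <| continuous_const.dotProduct <|
      (continuous_expConj N (Mᴴ * M)).matrix_mulVec continuous_const
  have hlower (s : ℝ) :
      ‖(M * exp (s • N)) *ᵥ w‖ ^ 2 ≤ reForm (expConj N (Mᴴ * M) s) w := by
    rw [expConj_conjTranspose_mul_self]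
    exact sq_norm_mulVec_le_reForm _ w
  obtain ⟨s, hs, hne⟩ := h.exists_mulVec_exp_ne_zero hw
  rw [reForm_intervalIntegral (continuous_expConj N (Mᴴ * M))]
  exact intervalIntegral.integral_pos one_pos hcont.continuousOn
    (fun s _ => (sq_nonneg _).trans (hlower s))
    ⟨s, hs, (by positivity : 0 < ‖(M * exp (s • N)) *ᵥ w‖ ^ 2).trans_le (hlower s)⟩

end Gramian

lemma SKCondition.exists_compensator (h : SKCondition N M) :
    ∃ P : Matrix m m ℂ, P.IsHermitian ∧ (Nᴴ * P + P * N + Mᴴ * M).PosDef := by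
  classical
  refine ⟨∫ s in (0 : ℝ)..1, (1 - s) • expConj N (Mᴴ * M) s,
    isSelfAdjoint_intervalIntegral fun s => (IsSelfAdjoint.all (1 - s)).smul
      (isSelfAdjoint_expConj N (isHermitian_conjTranspose_mul_self M) s), ?_⟩
  rw [← star_eq_conjTranspose N, lyapunov_integral_expConj]
  exact h.posDef_integral_expConj

end Observability

section Decay

open Set

lemma le_mul_exp_of_hasDerivWithinAt_le {f f' : ℝ → ℝ} {g : ℝ}
    (hf : ∀ t, 0 ≤ t → HasDerivWithinAt f (f' t) (Ici 0) t)
    (hle : ∀ t, 0 ≤ t → f' t ≤ g * f t) {t : ℝ} (ht : 0 ≤ t) :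
    f t ≤ f 0 * Real.exp (g * t) := by
  have hgronwall := le_gronwallBound_of_liminf_deriv_right_le (ε := 0) (a := 0) (b := t)
    (fun s hs => (hf s hs.1).continuousWithinAt.mono Icc_subset_Ici_self)
    (fun s hs _ => ((hf s hs.1).mono (Ici_subset_Ici.2 hs.1)).liminf_right_slope_le) le_rfl
    (fun s hs => (hle s hs.1).trans_eq (add_zero _).symm) t (right_mem_Icc.2 ht)
  rwa [gronwallBound_ε0, sub_zero] at hgronwall

variable {m : Type*} [Fintype m] {H : Matrix m m ℂ}

lemma norm_le_of_lyapunov (hH : H.IsHermitian) {e c g : ℝ} (he : 0 < e) (hc : 0 < c) (hg : 0 ≤ g)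
    (hlower : ∀ w, e * ‖w‖ ^ 2 ≤ reForm H w) (hupper : ∀ w, reForm H w ≤ c * ‖w‖ ^ 2)
    {v v' : ℝ → m → ℂ} (hv : ∀ t, 0 ≤ t → HasDerivWithinAt v (v' t) (Ici 0) t)
    (hdiss : ∀ t, 0 ≤ t → 2 * (star (v t) ⬝ᵥ H *ᵥ v' t).re ≤ -g * ‖v t‖ ^ 2)
    {t : ℝ} (ht : 0 ≤ t) :
    ‖v t‖ ≤ √(c / e) * Real.exp (-(g / (2 * c)) * t) * ‖v 0‖ := by
  have hdecay : reForm H (v t) ≤ reForm H (v 0) * Real.exp (-(g / c) * t) := by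
    refine le_mul_exp_of_hasDerivWithinAt_le (fun s hs => hasDerivWithinAt_reForm hH (hv s hs))
      (fun s hs => (hdiss s hs).trans ?_) ht
    have := mul_le_mul_of_nonneg_left (hupper (v s)) (div_nonneg hg hc.le)
    rw [← mul_assoc, div_mul_cancel₀ _ hc.ne'] at this
    linarith
  refine le_of_sq_le_sq ?_ (by positivity)
  calc ‖v t‖ ^ 2 ≤ reForm H (v t) / e := by
        rw [le_div_iff₀' he]; exact hlower (v t)
    _ ≤ c * ‖v 0‖ ^ 2 * Real.exp (-(g / c) * t) / e := by
        gcongr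
        exact hdecay.trans (by gcongr; exact hupper (v 0))
    _ = (√(c / e) * Real.exp (-(g / (2 * c)) * t) * ‖v 0‖) ^ 2 := by
        rw [mul_pow, mul_pow, Real.sq_sqrt (by positivity), ← Real.exp_nat_mul]
        have : ((2 : ℕ) : ℝ) * (-(g / (2 * c)) * t) = -(g / c) * t := by push_cast; field_simp
        rw [this]; ring

end Decay

section Dissipation

variable {m : Type*} [Fintype m] {S A B : Matrix m m ℂ} {x y : ℝ} {w w' : m → ℂ}

lemma re_star_dotProduct_mulVec_of_flow
    (hflow : S *ᵥ w' + ((x : ℂ) • A + (y : ℂ) • B) *ᵥ w = 0) :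
    (star w ⬝ᵥ S *ᵥ w').re = -(x * reForm A w + y * reForm B w) := by
  rw [eq_neg_of_add_eq_zero_left hflow]
  simp [reForm, add_mulVec, smul_mulVec, dotProduct_add]

variable [DecidableEq m]

lemma eq_of_flow (hS : IsUnit S)
    (hflow : S *ᵥ w' + ((x : ℂ) • A + (y : ℂ) • B) *ᵥ w = 0) :
    w' = -(x • (S⁻¹ * A) *ᵥ w + y • S⁻¹ *ᵥ (B *ᵥ w)) := by
  have hw' := congrArg (S⁻¹ *ᵥ ·) (eq_neg_of_add_eq_zero_left hflow)
  simp only [mulVec_mulVec, nonsing_inv_mul _ ((isUnit_iff_isUnit_det S).1 hS), one_mulVec] at hw'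
  rw [hw', mulVec_neg, add_mulVec, mulVec_add, smul_mulVec, smul_mulVec, mulVec_smul, mulVec_smul,
    mulVec_mulVec, mulVec_mulVec]
  rfl

lemma two_mul_re_compensator_of_flow (hS : IsUnit S) {P : Matrix m m ℂ} (hP : P.IsHermitian)
    (hflow : S *ᵥ w' + ((x : ℂ) • A + (y : ℂ) • B) *ᵥ w = 0) :
    2 * (star w ⬝ᵥ P *ᵥ w').re
      = -(x * reForm ((S⁻¹ * A)ᴴ * P + P * (S⁻¹ * A)) w
          + 2 * y * (star w ⬝ᵥ (P * S⁻¹) *ᵥ (B *ᵥ w)).re) := by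
  rw [reForm_conjTranspose_mul_add_mul hP, eq_of_flow hS hflow, ← mulVec_mulVec _ P S⁻¹]
  simp only [mulVec_neg, mulVec_add, mulVec_smul, dotProduct_neg, dotProduct_add, dotProduct_smul,
    Complex.neg_re, Complex.add_re, Complex.smul_re, smul_eq_mul]
  ring

lemma young_absorption {d ε κ k p q r y : ℝ} (hd : 0 < d) (hε : 0 ≤ ε) (hr : 0 ≤ r) (hy : 0 ≤ y)
    (hk : 0 ≤ k) (hry : r ≤ y) (hq : q ^ 2 ≤ r * y) (hεκ : ε * (k + 2 * p ^ 2 / d) ≤ 2 * κ)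
    (α β : ℝ) :
    -(2 * y * (κ * β ^ 2)) + ε * (-(r * (d * α ^ 2 - k * β ^ 2)) + 2 * (q * p * α * β))
      ≤ -(ε * (d / 2) * r) * α ^ 2 := by
  have hcross : 2 * (q * p * α * β) ≤ d / 2 * r * α ^ 2 + 2 * p ^ 2 / d * y * β ^ 2 := by
    refine two_mul_le_add_of_sq_le_mul (by positivity) (by positivity) ?_
    calc (q * p * α * β) ^ 2 = q ^ 2 * (p * α * β) ^ 2 := by ring
      _ ≤ r * y * (p * α * β) ^ 2 := by gcongr
      _ = d / 2 * r * α ^ 2 * (2 * p ^ 2 / d * y * β ^ 2) := by field_simp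
  calc _ ≤ -(2 * y * (κ * β ^ 2)) + ε * (-(r * (d * α ^ 2)) + y * k * β ^ 2
          + (d / 2 * r * α ^ 2 + 2 * p ^ 2 / d * y * β ^ 2)) := by
        have : r * k * β ^ 2 ≤ y * k * β ^ 2 := by gcongr
        gcongr
        linarith
    _ = -(ε * (d / 2) * r) * α ^ 2 + y * β ^ 2 * (ε * (k + 2 * p ^ 2 / d) - 2 * κ) := by ring
    _ ≤ -(ε * (d / 2) * r) * α ^ 2 :=
        add_le_of_nonpos_right (mul_nonpos_of_nonneg_of_nonpos (by positivity) (by linarith))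

open scoped Matrix.Norms.Operator in
lemma dissipation_le (hS : IsUnit S) {P : Matrix m m ℂ} (hP : P.IsHermitian) {d ε κ r : ℝ}
    (hd : 0 < d) (hε : 0 ≤ ε) (hx : 0 < x) (hr : 0 ≤ r) (hry : r ≤ y) (hrx : r * y ≤ x ^ 2)
    (hεκ : ε * (Fintype.card m + 2 * (Fintype.card m * ‖P * S⁻¹‖) ^ 2 / d) ≤ 2 * κ)
    (hA : 0 ≤ reForm A w) (hB : κ * ‖B *ᵥ w‖ ^ 2 ≤ reForm B w)
    (hcomp : d * ‖w‖ ^ 2 ≤ reForm ((S⁻¹ * A)ᴴ * P + P * (S⁻¹ * A) + Bᴴ * B) w)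
    (hflow : S *ᵥ w' + ((x : ℂ) • A + (y : ℂ) • B) *ᵥ w = 0) :
    2 * (star w ⬝ᵥ (S + (ε * (r / x)) • P) *ᵥ w').re ≤ -(ε * (d / 2) * r) * ‖w‖ ^ 2 := by
  have hy : 0 ≤ y := hr.trans hry
  have hq : (r * y / x) ^ 2 ≤ r * y := by
    rw [div_pow, div_le_iff₀ (by positivity), sq (r * y)]
    gcongr
  have hgain : d * ‖w‖ ^ 2 - Fintype.card m * ‖B *ᵥ w‖ ^ 2
      ≤ reForm ((S⁻¹ * A)ᴴ * P + P * (S⁻¹ * A)) w := by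
    rw [reForm_add _ (Bᴴ * B)] at hcomp
    linarith [reForm_le_card_mul_sq_norm_mulVec B w]
  have hcross := neg_le_of_abs_le (abs_re_star_dotProduct_mulVec_le (P * S⁻¹) w (B *ᵥ w))
  calc 2 * (star w ⬝ᵥ (S + (ε * (r / x)) • P) *ᵥ w').re
      = 2 * (star w ⬝ᵥ S *ᵥ w').re + ε * (r / x * (2 * (star w ⬝ᵥ P *ᵥ w').re)) := by
        simp only [add_mulVec, smul_mulVec, dotProduct_add, dotProduct_smul, Complex.add_re,
          Complex.smul_re, smul_eq_mul]
        ring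
    _ = -(2 * x * reForm A w) - 2 * y * reForm B w
          + ε * (-(r * reForm ((S⁻¹ * A)ᴴ * P + P * (S⁻¹ * A)) w)
            - 2 * (r * y / x * (star w ⬝ᵥ (P * S⁻¹) *ᵥ (B *ᵥ w)).re)) := by
        rw [re_star_dotProduct_mulVec_of_flow hflow, two_mul_re_compensator_of_flow hS hP hflow]
        field_simp
        ring
    _ ≤ -0 - 2 * y * (κ * ‖B *ᵥ w‖ ^ 2)
          + ε * (-(r * (d * ‖w‖ ^ 2 - Fintype.card m * ‖B *ᵥ w‖ ^ 2))
            - 2 * (r * y / x * -(Fintype.card m * ‖P * S⁻¹‖ * ‖w‖ * ‖B *ᵥ w‖))) := by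
        gcongr
        positivity
    _ = -(2 * y * (κ * ‖B *ᵥ w‖ ^ 2))
          + ε * (-(r * (d * ‖w‖ ^ 2 - Fintype.card m * ‖B *ᵥ w‖ ^ 2))
            + 2 * (r * y / x * (Fintype.card m * ‖P * S⁻¹‖) * ‖w‖ * ‖B *ᵥ w‖)) := by
        ring
    _ ≤ -(ε * (d / 2) * r) * ‖w‖ ^ 2 :=
        young_absorption hd hε hr hy (Nat.cast_nonneg _) hry hq hεκ _ _

open scoped Matrix.Norms.Operator in
lemma exists_uniform_lyapunov (hS : S.PosDef) (hA : ∀ w, 0 ≤ reForm A w) {κ : ℝ} (hκ : 0 < κ)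
    (hB : ∀ w, κ * ‖B *ᵥ w‖ ^ 2 ≤ reForm B w) (hSK : SKCondition (S⁻¹ * A) B) :
    ∃ e > 0, ∃ c > 0, ∃ γ > 0, ∀ x > (0 : ℝ), ∀ y > (0 : ℝ), ∃ H : Matrix m m ℂ, H.IsHermitian ∧
      (∀ w, e * ‖w‖ ^ 2 ≤ reForm H w) ∧ (∀ w, reForm H w ≤ c * ‖w‖ ^ 2) ∧
      ∀ w w', S *ᵥ w' + ((x : ℂ) • A + (y : ℂ) • B) *ᵥ w = 0 →
        2 * (star w ⬝ᵥ H *ᵥ w').re ≤ -(γ * min y (x ^ 2 / y)) * ‖w‖ ^ 2 := by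
  obtain ⟨P, hP, hcomp⟩ := hSK.exists_compensator
  obtain ⟨d, hd, hcomp⟩ := exists_mul_sq_norm_le_reForm hcomp
  obtain ⟨e, he, hSe⟩ := exists_mul_sq_norm_le_reForm hS
  obtain ⟨ε, hε, hεlt⟩ := exists_pos_mul_lt (lt_min (mul_pos two_pos hκ) (half_pos he))
    (max (Fintype.card m + 2 * (Fintype.card m * ‖P * S⁻¹‖) ^ 2 / d) (Fintype.card m * ‖P‖))
  rw [mul_comm, mul_max_of_nonneg _ _ hε.le, max_lt_iff, lt_min_iff, lt_min_iff] at hεlt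
  obtain ⟨⟨hεκ, -⟩, -, hεe⟩ := hεlt
  refine ⟨e / 2, half_pos he, Fintype.card m * ‖S‖ + e / 2, by positivity, ε * (d / 2),
    by positivity, fun x hx y hy => ?_⟩
  let r := min y (x ^ 2 / y)
  have hr : 0 < r := lt_min hy (by positivity)
  have hry : r ≤ y := min_le_left _ _
  have hrx : r * y ≤ x ^ 2 := (le_div_iff₀ hy).1 (min_le_right _ _)
  have hr_le_x : r ≤ x := le_of_sq_le_sq (by nlinarith) hx.le
  have hpert (w : m → ℂ) : |ε * (r / x) * reForm P w| ≤ e / 2 * ‖w‖ ^ 2 :=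
    calc |ε * (r / x) * reForm P w| = ε * (r / x) * |reForm P w| := by
          rw [abs_mul, abs_of_nonneg (by positivity)]
      _ ≤ ε * 1 * (Fintype.card m * ‖P‖ * ‖w‖ ^ 2) := by
          gcongr
          · exact (div_le_one hx).2 hr_le_x
          · exact abs_reForm_le P w
      _ = ε * (Fintype.card m * ‖P‖) * ‖w‖ ^ 2 := by ring
      _ ≤ e / 2 * ‖w‖ ^ 2 := by gcongr
  refine ⟨S + (ε * (r / x)) • P, hS.isHermitian.add (hP.smul (.all _)), fun w => ?_, fun w => ?_,
    fun w w' hflow => dissipation_le hS.isUnit hP hd hε.le hx hr.le hry hrx hεκ.le (hA w) (hB w)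
      (hcomp w) hflow⟩
  · rw [reForm_add, reForm_smul]
    linarith [hSe w, neg_le_of_abs_le (hpert w)]
  · rw [reForm_add, reForm_smul, add_mul]
    exact add_le_add (le_of_abs_le (abs_reForm_le S w)) (le_of_abs_le (hpert w))

end Dissipation

lemma min_div_mul_le_max_mul_min {κ y z : ℝ} (hκ : 0 < κ) (hy : 0 ≤ y) (hz : 0 ≤ z) :
    min (y / κ) (κ * z) ≤ max κ⁻¹ κ * min y z := by
  rw [mul_min_of_nonneg _ _ (by positivity), div_eq_inv_mul]
  gcongr
  · exact le_max_left _ _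
  · exact le_max_right _ _

theorem exp_decay_of_SK_general {m : Type*} [Fintype m] [DecidableEq m] {S A B : Matrix m m ℂ}
    (hS : S.PosDef) (hA : ∀ η : m → ℂ, 0 ≤ (star η ⬝ᵥ A *ᵥ η).re) {κ : ℝ} (hκ : 0 < κ)
    (hB : ∀ η : m → ℂ, κ * ‖B *ᵥ η‖ ^ 2 ≤ (star η ⬝ᵥ B *ᵥ η).re)
    (hSK : SKCondition (S⁻¹ * A) (S⁻¹ * B)) :
    ∃ c > 0, ∃ C > 0, ∀ x > (0 : ℝ), ∀ y > (0 : ℝ), ∀ v v' : ℝ → m → ℂ,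
      (∀ t, 0 ≤ t → HasDerivWithinAt v (v' t) (Set.Ici 0) t) →
      (∀ t, 0 ≤ t → S *ᵥ v' t + ((x : ℂ) • A + (y : ℂ) • B) *ᵥ v t = 0) →
      ∀ t, 0 ≤ t →
        ‖v t‖ ≤ C * Real.exp (-c * t * min (y / κ) (κ * (x ^ 2 / y))) * ‖v 0‖ := by
  obtain ⟨e, he, c, hc, γ, hγ, hlyapunov⟩ := exists_uniform_lyapunov hS hA hκ hB hSK.of_mul_left
  let K := max κ⁻¹ κ
  have hK : 0 < K := lt_max_of_lt_right hκ
  refine ⟨γ / (2 * c * K), by positivity, √(c / e), by positivity,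
    fun x hx y hy v v' hv hflow t ht => ?_⟩
  obtain ⟨H, hH, hlower, hupper, hdiss⟩ := hlyapunov x hx y hy
  refine (norm_le_of_lyapunov hH he hc (by positivity) hlower hupper hv
    (fun s hs => hdiss _ _ (hflow s hs)) ht).trans ?_
  gcongr √(c / e) * Real.exp ?_ * ‖v 0‖
  calc -(γ * min y (x ^ 2 / y) / (2 * c)) * t
      = -(γ / (2 * c * K) * t * (K * min y (x ^ 2 / y))) := by field_simp
    _ ≤ -(γ / (2 * c * K) * t * min (y / κ) (κ * (x ^ 2 / y))) := by
        gcongr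
        exact min_div_mul_le_max_mul_min hκ hy.le (by positivity)
    _ = -(γ / (2 * c * K)) * t * min (y / κ) (κ * (x ^ 2 / y)) := by ring

theorem exp_decay_of_SK (n : ℕ) (hn : 1 ≤ n)
    (S A B : Matrix (Fin n) (Fin n) ℂ) (hS : S.PosDef)
    (hA : ∀ η : Fin n → ℂ, (star η ⬝ᵥ A.mulVec η).re = 0)
    (κ : ℝ) (hκ : 0 < κ)
    (hB : ∀ η : Fin n → ℂ,
      κ * ‖(B.mulVec η : Fin n → ℂ)‖ ^ 2 ≤ (star η ⬝ᵥ B.mulVec η).re)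
    (a b : ℝ)
    (hSK : SKCondition (S⁻¹ * A) (S⁻¹ * B)) :
    ∃ c > 0, ∃ C > 0, ∀ ρ > 0, ∀ v v' : ℝ → Fin n → ℂ,
      (∀ t : ℝ, 0 ≤ t → HasDerivAt v (v' t) t) →
      (∀ t : ℝ, 0 ≤ t →
        S.mulVec (v' t)
          + (((ρ ^ a : ℝ) : ℂ) • A + ((ρ ^ b : ℝ) : ℂ) • B).mulVec (v t) = 0) →
      ∀ t : ℝ, 0 ≤ t →
        ‖(v t : Fin n → ℂ)‖ ≤
          C * Real.exp (-c * t * min (ρ ^ b / κ) (κ * ρ ^ (2 * a - b))) *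
            ‖(v 0 : Fin n → ℂ)‖ := by
  obtain ⟨c, hc, C, hC, hdecay⟩ := exp_decay_of_SK_general hS (fun η => (hA η).ge) hκ hB hSK
  refine ⟨c, hc, C, hC, fun ρ hρ v v' hv hflow t ht => ?_⟩
  rw [Real.rpow_sub hρ, mul_comm 2 a, Real.rpow_mul hρ.le, Real.rpow_two]
  exact hdecay (ρ ^ a) (Real.rpow_pos_of_pos hρ a) (ρ ^ b) (Real.rpow_pos_of_pos hρ b) v v'
    (fun s hs => (hv s hs).hasDerivWithinAt) hflow t ht
end

section
/- Let 0 < θ < 1, c > 0 and C₀ > 0, and let L : [0, ∞) → [0, ∞) be a differentiable function satisfying L'(t) + c · C₀^{-θ/(1-θ)} · L(t)^{1/(1-θ)} ≤ 0 for all t ≥ 0. Then for all t ≥ 0 one has L(t) ≤ (1 + c · (θ/(1-θ)) · (L(0)/C₀)^{θ/(1-θ)} · t)^{-(1-θ)/θ} · L(0). -/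
/-!
With `p = θ / (1 - θ)` and `k = c * C₀ ^ (-p)` the hypothesis is the Bernoulli inequality
`L' ≤ -k * L ^ (p + 1)`. Where `L` is positive, dividing by `L ^ (p + 1)` turns it into
`(L ^ (-p) / p)' ≥ k`, which integrates at once. Since `L` is nonincreasing, `L t > 0` forces
`L > 0` on all of `[0, t]`, and for `L t = 0` the bound is trivial.
-/

section BernoulliInequality

variable {f f' : ℝ → ℝ} {a b k p : ℝ}

theorem rpow_neg_div_add_mul_sub_le_of_hasDerivAt_le (hp : p ≠ 0) (hab : a ≤ b)
    (hf : ContinuousOn f (Set.Icc a b)) (hf' : ∀ x ∈ Set.Ioo a b, HasDerivAt f (f' x) x)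
    (hpos : ∀ x ∈ Set.Icc a b, 0 < f x)
    (hbound : ∀ x ∈ Set.Ioo a b, f' x ≤ -k * f x ^ (p + 1)) :
    f a ^ (-p) / p + k * (b - a) ≤ f b ^ (-p) / p := by
  have hcont : ContinuousOn (fun x ↦ f x ^ (-p) / p) (Set.Icc a b) :=
    (hf.rpow_const fun x hx ↦ Or.inl (hpos x hx).ne').div_const p
  have hderiv : ∀ x ∈ Set.Ioo a b,
      HasDerivAt (fun x ↦ f x ^ (-p) / p) (-f' x * f x ^ (-(p + 1))) x := by
    intro x hx
    have hfx : f x ≠ 0 := (hpos x (Set.Ioo_subset_Icc_self hx)).ne'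
    refine (((hf' x hx).rpow_const (Or.inl hfx)).div_const p).congr_deriv ?_
    rw [neg_add']
    field_simp
  have hk : ∀ x ∈ Set.Ioo a b, k ≤ -f' x * f x ^ (-(p + 1)) := by
    intro x hx
    have hfx : 0 < f x := hpos x (Set.Ioo_subset_Icc_self hx)
    rw [Real.rpow_neg hfx.le, ← div_eq_mul_inv, le_div_iff₀ (Real.rpow_pos_of_pos hfx _)]
    linarith [hbound x hx]
  have hmvt := (convex_Icc a b).mul_sub_le_image_sub_of_le_deriv hcont
    (by
      rw [interior_Icc]
      exact fun x hx ↦ (hderiv x hx).differentiableAt.differentiableWithinAt)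
    (by
      rw [interior_Icc]
      exact fun x hx ↦ (hderiv x hx).deriv ▸ hk x hx)
    a (Set.left_mem_Icc.2 hab) b (Set.right_mem_Icc.2 hab) hab
  linarith

theorem antitoneOn_of_hasDerivAt_le_neg_mul_rpow (hk : 0 ≤ k)
    (hf : ContinuousOn f (Set.Icc a b)) (hf' : ∀ x ∈ Set.Ioo a b, HasDerivAt f (f' x) x)
    (hnonneg : ∀ x ∈ Set.Icc a b, 0 ≤ f x)
    (hbound : ∀ x ∈ Set.Ioo a b, f' x ≤ -k * f x ^ p) :
    AntitoneOn f (Set.Icc a b) := by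
  refine antitoneOn_of_hasDerivWithinAt_nonpos (f' := f') (convex_Icc a b) hf ?_ ?_ <;>
    rw [interior_Icc]
  · exact fun x hx ↦ (hf' x hx).hasDerivWithinAt
  · intro x hx
    have hfx : 0 ≤ f x ^ p := Real.rpow_nonneg (hnonneg x (Set.Ioo_subset_Icc_self hx)) p
    exact (hbound x hx).trans (mul_nonpos_of_nonpos_of_nonneg (neg_nonpos.2 hk) hfx)

theorem le_rpow_mul_of_mul_rpow_neg_le {x y r : ℝ} (hp : 0 < p) (hx : 0 < x) (hy : 0 < y)
    (hr : 0 < r) (h : r * x ^ (-p) ≤ y ^ (-p)) : y ≤ r ^ (-p⁻¹) * x := by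
  have hxp : 0 < x ^ (-p) := Real.rpow_pos_of_pos hx _
  calc y ≤ (r * x ^ (-p)) ^ (-p)⁻¹ :=
        (Real.le_rpow_inv_iff_of_neg hy (mul_pos hr hxp) (neg_neg_of_pos hp)).2 h
    _ = r ^ (-p⁻¹) * x := by
        rw [Real.mul_rpow hr.le hxp.le, Real.rpow_rpow_inv hx.le (neg_ne_zero.2 hp.ne'), inv_neg]

theorem le_rpow_mul_of_hasDerivAt_le_neg_mul_rpow (hp : 0 < p) (hk : 0 ≤ k) (hab : a ≤ b)
    (hf : ContinuousOn f (Set.Icc a b)) (hf' : ∀ x ∈ Set.Ioo a b, HasDerivAt f (f' x) x)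
    (hnonneg : ∀ x ∈ Set.Icc a b, 0 ≤ f x)
    (hbound : ∀ x ∈ Set.Ioo a b, f' x ≤ -k * f x ^ (p + 1)) :
    f b ≤ (1 + k * p * f a ^ p * (b - a)) ^ (-p⁻¹) * f a := by
  have ha : a ∈ Set.Icc a b := Set.left_mem_Icc.2 hab
  have hb : b ∈ Set.Icc a b := Set.right_mem_Icc.2 hab
  have hfa : 0 ≤ f a := hnonneg a ha
  have hbase : 0 < 1 + k * p * f a ^ p * (b - a) := by
    have := sub_nonneg.2 hab
    positivity
  rcases (hnonneg b hb).eq_or_lt with hfb | hfb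
  · rw [← hfb]
    positivity
  have hanti := antitoneOn_of_hasDerivAt_le_neg_mul_rpow hk hf hf' hnonneg hbound
  have hpos : ∀ x ∈ Set.Icc a b, 0 < f x := fun x hx ↦ hfb.trans_le (hanti hx hb hx.2)
  refine le_rpow_mul_of_mul_rpow_neg_le hp (hpos a ha) hfb hbase ?_
  have hcancel : f a ^ p * f a ^ (-p) = 1 := by
    rw [← Real.rpow_add (hpos a ha), add_neg_cancel, Real.rpow_zero]
  calc (1 + k * p * f a ^ p * (b - a)) * f a ^ (-p)
      = p * (f a ^ (-p) / p + k * (b - a)) := by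
        field_simp
        linear_combination k * p * (b - a) * hcancel
    _ ≤ p * (f b ^ (-p) / p) := by
        gcongr
        exact rpow_neg_div_add_mul_sub_le_of_hasDerivAt_le hp.ne' hab hf hf' hpos hbound
    _ = f b ^ (-p) := mul_div_cancel₀ _ hp.ne'

end BernoulliInequality

theorem lyapunov_polynomial_decay (θ c C₀ : ℝ)
    (hθ0 : 0 < θ) (hθ1 : θ < 1) (hc : 0 < c) (hC₀ : 0 < C₀)
    (L L' : ℝ → ℝ)
    (hLnonneg : ∀ t : ℝ, 0 ≤ t → 0 ≤ L t)
    (hLderiv : ∀ t : ℝ, 0 ≤ t → HasDerivAt L (L' t) t)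
    (hineq : ∀ t : ℝ, 0 ≤ t →
      L' t + c * C₀ ^ (-(θ / (1 - θ))) * L t ^ (1 / (1 - θ)) ≤ 0) :
    ∀ t : ℝ, 0 ≤ t →
      L t ≤ (1 + c * (θ / (1 - θ)) * (L 0 / C₀) ^ (θ / (1 - θ)) * t)
              ^ (-(1 - θ) / θ) * L 0 := by
  intro t ht
  have hθ : 0 < 1 - θ := sub_pos.2 hθ1
  have hexp : 1 / (1 - θ) = θ / (1 - θ) + 1 := by field_simp; ring
  have hexp_inv : -(1 - θ) / θ = -(θ / (1 - θ))⁻¹ := by rw [inv_div, neg_div]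
  have hp : 0 < θ / (1 - θ) := div_pos hθ0 hθ
  rw [hexp] at hineq
  rw [hexp_inv]
  set p := θ / (1 - θ)
  have hdecay := le_rpow_mul_of_hasDerivAt_le_neg_mul_rpow (k := c * C₀ ^ (-p)) hp
    (by positivity) ht (fun x hx ↦ (hLderiv x hx.1).continuousAt.continuousWithinAt)
    (fun x hx ↦ hLderiv x hx.1.le) (fun x hx ↦ hLnonneg x hx.1)
    (fun x hx ↦ by linarith [hineq x hx.1.le])
  have hcoeff : c * p * (L 0 / C₀) ^ p * t = c * C₀ ^ (-p) * p * L 0 ^ p * (t - 0) := by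
    rw [Real.div_rpow (hLnonneg 0 le_rfl) hC₀.le, Real.rpow_neg hC₀.le]
    ring
  rwa [hcoeff]
end

section
/- Let n₁, n₂ be nonnegative integers with n = n₁ + n₂. Let M₂₂ be an n₂×n₂ complex matrix whose kernel is trivial, and let N₂₁ be an n₂×n₁ complex matrix whose kernel is trivial. Let M be the n×n block matrix [[0, 0], [0, M₂₂]] and let N be any n×n block matrix of the form [[N₁₁, N₁₂], [N₂₁, N₂₂]]. Then the pair (N, M) satisfies the (SK) condition. -/
open Matrix

section BlockMatrices

variable {R S l m n o : Type*} [Fintype n] [Fintype o]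

lemma fromBlocks_zero_zero_zero_mulVec_eq_zero_iff [NonUnitalNonAssocSemiring R]
    (D : Matrix m o R) (φ : n ⊕ o → R) :
    fromBlocks (0 : Matrix l n R) 0 0 D *ᵥ φ = 0 ↔ D *ᵥ (φ ∘ Sum.inr) = 0 := by
  simp only [fromBlocks_mulVec, zero_mulVec, zero_add, ← Sum.elim_zero_zero, Sum.elim_eq_iff,
    true_and]

lemma smul_elim_zero_add_fromBlocks_mulVec_eq_zero_iff
    [NonUnitalNonAssocSemiring R] [SMulZeroClass S R]
    (A : Matrix n n R) (B : Matrix n o R) (C : Matrix o n R) (D : Matrix o o R)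
    (c : S) (x : n → R) :
    c • Sum.elim x 0 + fromBlocks A B C D *ᵥ Sum.elim x 0 = 0 ↔
      c • x + A *ᵥ x = 0 ∧ C *ᵥ x = 0 := by
  have hsum : c • Sum.elim x 0 + fromBlocks A B C D *ᵥ Sum.elim x 0 =
      Sum.elim (c • x + A *ᵥ x) (C *ᵥ x) := by
    ext (i | i) <;> simp [fromBlocks_mulVec]
  rw [hsum, ← Sum.elim_zero_zero, Sum.elim_eq_iff]

end BlockMatrices

/-- The right-hand side is the Hautus test for observability of the pair `(N₁₁, N₂₁)`. -/
theorem sk_of_trivial_kernels_general {m₁ m₂ : Type*} [Fintype m₁] [Fintype m₂]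
    {M₂₂ : Matrix m₂ m₂ ℂ} (hM₂₂ : ∀ y : m₂ → ℂ, M₂₂ *ᵥ y = 0 → y = 0)
    (N₁₁ : Matrix m₁ m₁ ℂ) (N₁₂ : Matrix m₁ m₂ ℂ)
    (N₂₁ : Matrix m₂ m₁ ℂ) (N₂₂ : Matrix m₂ m₂ ℂ) :
    SKCondition (fromBlocks N₁₁ N₁₂ N₂₁ N₂₂) (fromBlocks 0 0 0 M₂₂) ↔
      ∀ (x : m₁ → ℂ) (c : ℂ), N₂₁ *ᵥ x = 0 → c • x + N₁₁ *ᵥ x = 0 → x = 0 := by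
  constructor
  · intro hSK x c hN₂₁x hN₁₁x
    have hM : fromBlocks (0 : Matrix m₁ m₁ ℂ) 0 0 M₂₂ *ᵥ Sum.elim x 0 = 0 :=
      (fromBlocks_zero_zero_zero_mulVec_eq_zero_iff _ _).2 (mulVec_zero M₂₂)
    have hN : c • Sum.elim x 0 + fromBlocks N₁₁ N₁₂ N₂₁ N₂₂ *ᵥ Sum.elim x 0 = 0 :=
      (smul_elim_zero_add_fromBlocks_mulVec_eq_zero_iff ..).2 ⟨hN₁₁x, hN₂₁x⟩
    exact congrArg (· ∘ Sum.inl) (hSK _ c hM hN)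
  · intro hHautus φ c hM hN
    have hφ_inr : φ ∘ Sum.inr = 0 :=
      hM₂₂ _ ((fromBlocks_zero_zero_zero_mulVec_eq_zero_iff _ _).1 hM)
    obtain ⟨x, rfl⟩ : ∃ x : m₁ → ℂ, φ = Sum.elim x 0 :=
      ⟨φ ∘ Sum.inl, by rw [← hφ_inr, Sum.elim_comp_inl_inr]⟩
    obtain ⟨hN₁₁x, hN₂₁x⟩ := (smul_elim_zero_add_fromBlocks_mulVec_eq_zero_iff ..).1 hN
    rw [hHautus x c hN₂₁x hN₁₁x, Sum.elim_zero_zero]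

theorem sk_of_trivial_kernels (n₁ n₂ : ℕ)
    (M₂₂ : Matrix (Fin n₂) (Fin n₂) ℂ)
    (hM₂₂ : ∀ x : Fin n₂ → ℂ, M₂₂.mulVec x = 0 → x = 0)
    (N₁₁ : Matrix (Fin n₁) (Fin n₁) ℂ) (N₁₂ : Matrix (Fin n₁) (Fin n₂) ℂ)
    (N₂₁ : Matrix (Fin n₂) (Fin n₁) ℂ) (N₂₂ : Matrix (Fin n₂) (Fin n₂) ℂ)
    (hN₂₁ : ∀ x : Fin n₁ → ℂ, N₂₁.mulVec x = 0 → x = 0) :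
    SKCondition (Matrix.fromBlocks N₁₁ N₁₂ N₂₁ N₂₂)
      (Matrix.fromBlocks 0 0 0 M₂₂) :=
  (sk_of_trivial_kernels_general hM₂₂ N₁₁ N₁₂ N₂₁ N₂₂).2 fun x _ hx _ => hN₂₁ x hx
end
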